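/- Let Y_n be a sequence of finite nonempty sets with |Y_n| = M_n → ∞, let T_n : Y_n → Y_n be transitive permutations (single cycles of length M_n), and let F_n : Y_n → ℝ be a uniformly integrable sequence. For y ∈ Y_n let Fl(ε, n, y) denote the number of ε-fluctuations of the finite sequence (A_j(F_n,T_n,y))_{j=1}^{M_n}, and let U(k, ε, n) = {y ∈ Y_n : Fl(ε, n, y) ≤ k}. Then for all ε > 0 and δ > 0 there exist N and k such that for all n > N, (1/M_n)·|U(k, ε, n)| ≥ 1 − δ. -/

import Mathlib

open Filter Topology

/-- The ergodic average `A_K(F,T,y) = (1/K)·∑_{i<K} F(Tⁱy)`. -/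
noncomputable def ergAvg {Y : Type*} (T : Y → Y) (F : Y → ℝ) (K : ℕ) (y : Y) : ℝ :=
  (1 / (K : ℝ)) * ∑ i ∈ Finset.range K, F (T^[i] y)

/-- A finite real sequence `(s 1, …, s L)` admits `k` `ε`-fluctuations if there are
indices `1 ≤ n₁ < n₂ < … < n_{2k} ≤ L` with `|s n_{2i-1} − s n_{2i}| ≥ ε` for each
`i ≤ k`. -/
def admitsFluct (s : ℕ → ℝ) (L : ℕ) (ε : ℝ) (k : ℕ) : Prop :=
  ∃ m : ℕ → ℕ, StrictMono m ∧ (∀ i < 2 * k, 1 ≤ m i ∧ m i ≤ L) ∧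
    ∀ i < k, ε ≤ |s (m (2 * i)) - s (m (2 * i + 1))|

/-- The number of `ε`-fluctuations of the finite sequence `(s 1, …, s L)`: the largest
`k` such that the sequence admits `k` `ε`-fluctuations. -/
noncomputable def numFluct (s : ℕ → ℝ) (L : ℕ) (ε : ℝ) : ℕ :=
  sSup {k | admitsFluct s L ε k}

/-!
Write `A f n = S f n / n` for the ergodic averages. If `A f` crosses from below `α` to above `β`
during `[u, v]`, then `S (f - α) u ≤ 0 ≤ S (f - β) v`, so a trader who buys at the price
`S (f - α) u` and sells at the price `S (f - β) v` does not lose. Let `Φ y` be the largest gain of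
at most `k` non-overlapping trades along the orbit of `y`. Replacing `y` by `T y` removes the first
summand of each price, which raises the gain of every trade by `β - α`, up to a loss of
`max (f y - α) 0` for a trade that starts at time `0`. Hence `Φ ∘ T - Φ + max (f - α) 0 ≥ 0`. If the
orbit of `y` has `k` upcrossings, an optimal family of trades can be refined to exactly `k` trades
without loss, so the left-hand side is at least `k (β - α)` at `y`. The coboundary integrates to
`0`, which gives Bishop's inequality: `k` upcrossings occur with probability at most
`∫ max (f - α) 0 / (k (β - α))`.

A sequence with many `ε`-fluctuations has many rises or many falls by `ε`. Outside a set of small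
measure the averages stay in a bounded interval, which is covered by finitely many cells of length
`ε / 2`. Each rise crosses a whole cell, so some cell is crossed many times, and Bishop's
inequality for `f` and `-f` applies to each cell.
-/

open MeasureTheory ProbabilityTheory
open scoped Finset

section Schedule

variable {ι : Type*} [LinearOrder ι] {N : ι} {I U : Finset (ι × ι)} {k : ℕ}

/-- A finite set of pairs `(u, v)` with `u < v ≤ N` is a *schedule* if the intervals `[u, v]`
are pairwise non-overlapping; `v` may coincide with the left end of another interval. -/
structure IsSchedule (N : ι) (I : Finset (ι × ι)) : Prop where
  lt : ∀ x ∈ I, x.1 < x.2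
  le : ∀ x ∈ I, x.2 ≤ N
  nonoverlap : (I : Set (ι × ι)).Pairwise fun x y => x.2 ≤ y.1 ∨ y.2 ≤ x.1

theorem IsSchedule.empty (N : ι) : IsSchedule N ∅ :=
  ⟨by simp, by simp, by simp⟩

theorem IsSchedule.subset (hU : IsSchedule N U) (h : I ⊆ U) : IsSchedule N I :=
  ⟨fun x hx => hU.lt x (h hx), fun x hx => hU.le x (h hx), hU.nonoverlap.mono h⟩

theorem IsSchedule.insert (hI : IsSchedule N I) {x : ι × ι} (hlt : x.1 < x.2) (hle : x.2 ≤ N)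
    (hx : ∀ y ∈ I, x.2 ≤ y.1 ∨ y.2 ≤ x.1) : IsSchedule N (insert x I) where
  lt := Finset.forall_mem_insert _ _ _ |>.2 ⟨hlt, hI.lt⟩
  le := Finset.forall_mem_insert _ _ _ |>.2 ⟨hle, hI.le⟩
  nonoverlap := by
    rw [Finset.coe_insert]
    exact hI.nonoverlap.insert fun y hy _ => ⟨hx y hy, (hx y hy).symm⟩

theorem notMem_of_nonoverlap {x : ι × ι} (hlt : x.1 < x.2)
    (hx : ∀ y ∈ I, x.2 ≤ y.1 ∨ y.2 ≤ x.1) : x ∉ I :=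
  fun h => (hx x h).elim hlt.not_ge hlt.not_ge

/-- The total gain of buying one unit at time `u` for the price `p u` and selling it at time `v`
for the price `q v`, for all `(u, v)` in the schedule `I`. -/
def tradeGain (p q : ι → ℝ) (I : Finset (ι × ι)) : ℝ := ∑ x ∈ I, (q x.2 - p x.1)

theorem tradeGain_insert (p q : ι → ℝ) {x : ι × ι} (hx : x ∉ I) :
    tradeGain p q (insert x I) = q x.2 - p x.1 + tradeGain p q I :=
  Finset.sum_insert hx

theorem tradeGain_erase (p q : ι → ℝ) {x : ι × ι} (hx : x ∈ I) :
    tradeGain p q (I.erase x) = tradeGain p q I - (q x.2 - p x.1) :=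
  Finset.sum_erase_eq_sub hx

/-- Splitting the trade `z` at the ends of a gap `[a, b]` inside it: selling at `a` and buying
back at `b`. -/
theorem IsSchedule.exists_split (hI : IsSchedule N I) {z : ι × ι} (hz : z ∈ I) {a b : ι}
    (hza : z.1 < a) (hab : a ≤ b) (hbz : b < z.2) (p q : ι → ℝ) :
    ∃ I', IsSchedule N I' ∧ #I' = #I + 1 ∧ tradeGain p q I' = tradeGain p q I + (q a - p b) := by
  have hzI : ∀ y ∈ I.erase z, z.2 ≤ y.1 ∨ y.2 ≤ z.1 := fun y hy =>
    hI.nonoverlap hz (Finset.mem_of_mem_erase hy) (Finset.ne_of_mem_erase hy).symm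
  have hright : ∀ y ∈ I.erase z, z.2 ≤ y.1 ∨ y.2 ≤ b := fun y hy =>
    (hzI y hy).imp_right fun h => h.trans (hza.le.trans hab)
  have hleft : ∀ y ∈ Insert.insert (b, z.2) (I.erase z), a ≤ y.1 ∨ y.2 ≤ z.1 :=
    Finset.forall_mem_insert _ _ _ |>.2
      ⟨.inl hab, fun y hy => (hzI y hy).imp_left (hab.trans hbz.le).trans⟩
  have hrightNew := notMem_of_nonoverlap (x := (b, z.2)) hbz hright
  have hleftNew := notMem_of_nonoverlap (x := (z.1, a)) hza hleft
  have hschedRight := (hI.subset (I.erase_subset z)).insert (x := (b, z.2)) hbz (hI.le z hz) hright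
  have hsched := hschedRight.insert (x := (z.1, a)) hza
    ((hab.trans hbz.le).trans (hI.le z hz)) hleft
  refine ⟨_, hsched, ?_, ?_⟩
  · rw [Finset.card_insert_of_notMem hleftNew, Finset.card_insert_of_notMem hrightNew,
      Finset.card_erase_add_one hz]
  · rw [tradeGain_insert _ _ hleftNew, tradeGain_insert _ _ hrightNew, tradeGain_erase _ _ hz]
    ring

/-- By the pigeonhole principle, either some upcrossing in `U` overlaps no trade in `I`, or two
upcrossings overlap the same trade, which can then be interrupted between them. -/
theorem IsSchedule.exists_card_succ (hI : IsSchedule N I) (hU : IsSchedule N U)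
    (hcard : #I < #U) {p q : ι → ℝ} (hpq : ∀ x ∈ U, p x.1 ≤ 0 ∧ 0 ≤ q x.2) :
    ∃ I', IsSchedule N I' ∧ #I' = #I + 1 ∧ tradeGain p q I ≤ tradeGain p q I' := by
  by_cases hfree : ∃ x ∈ U, ∀ z ∈ I, x.2 ≤ z.1 ∨ z.2 ≤ x.1
  · obtain ⟨x, hxU, hx⟩ := hfree
    have hnew := notMem_of_nonoverlap (hU.lt x hxU) hx
    refine ⟨_, hI.insert (hU.lt x hxU) (hU.le x hxU) hx, Finset.card_insert_of_notMem hnew, ?_⟩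
    rw [tradeGain_insert _ _ hnew]
    linarith [hpq x hxU]
  · push Not at hfree
    choose! z hzI hz using hfree
    obtain ⟨x, hx, y, hy, hxy, heq⟩ := Finset.exists_ne_map_eq_of_card_lt_of_maps_to hcard hzI
    wlog hle : x.2 ≤ y.1 generalizing x y
    · exact this y hy x hx hxy.symm heq.symm ((hU.nonoverlap hx hy hxy).resolve_left hle)
    obtain ⟨I', hI', hcard', hgain⟩ :=
      hI.exists_split (hzI x hx) (hz x hx).1 hle (heq ▸ (hz y hy).2) p q
    exact ⟨I', hI', hcard', by linarith [hpq x hx, hpq y hy]⟩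

theorem IsSchedule.exists_card_eq (hI : IsSchedule N I) (hU : IsSchedule N U)
    {p q : ι → ℝ} (hpq : ∀ x ∈ U, p x.1 ≤ 0 ∧ 0 ≤ q x.2) (hIk : #I ≤ k) (hkU : k ≤ #U) :
    ∃ I', IsSchedule N I' ∧ #I' = k ∧ tradeGain p q I ≤ tradeGain p q I' := by
  induction k, hIk using Nat.le_induction with
  | base => exact ⟨I, hI, rfl, le_rfl⟩
  | succ k _ ih =>
    obtain ⟨I₁, hI₁, rfl, hgain₁⟩ := ih (Nat.le_of_succ_le hkU)
    obtain ⟨I₂, hI₂, hcard₂, hgain₂⟩ := hI₁.exists_card_succ hU hkU hpq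
    exact ⟨I₂, hI₂, hcard₂, hgain₁.trans hgain₂⟩

end Schedule

section MaxGain

variable {N k : ℕ} {I : Finset (ℕ × ℕ)} {p q : ℕ → ℝ}

open scoped Classical in
/-- The schedules with at most `k` trades up to time `N`, as a finite set. -/
noncomputable def schedules (N k : ℕ) : Finset (Finset (ℕ × ℕ)) :=
  {I ∈ (Finset.range (N + 1) ×ˢ Finset.range (N + 1)).powerset | IsSchedule N I ∧ #I ≤ k}

theorem mem_schedules : I ∈ schedules N k ↔ IsSchedule N I ∧ #I ≤ k := by
  simp only [schedules, Finset.mem_filter, Finset.mem_powerset]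
  refine and_iff_right_of_imp fun ⟨hI, _⟩ x hx => ?_
  have hlt := hI.lt x hx
  have hle := hI.le x hx
  simp only [Finset.mem_product, Finset.mem_range]
  omega

theorem schedules_nonempty (N k : ℕ) : (schedules N k).Nonempty :=
  ⟨∅, mem_schedules.2 ⟨.empty N, by simp⟩⟩

/-- The largest gain of at most `k` trades up to time `N` with prices `p` and `q`; along an
orbit it is the potential whose increment controls the number of upcrossings. -/
noncomputable def maxGain (N k : ℕ) (p q : ℕ → ℝ) : ℝ :=
  (schedules N k).sup' (schedules_nonempty N k) (tradeGain p q)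

theorem tradeGain_le_maxGain (hI : IsSchedule N I) (hk : #I ≤ k) :
    tradeGain p q I ≤ maxGain N k p q :=
  Finset.le_sup' (tradeGain p q) (mem_schedules.2 ⟨hI, hk⟩)

theorem exists_tradeGain_eq_maxGain (N k : ℕ) (p q : ℕ → ℝ) :
    ∃ I, IsSchedule N I ∧ #I ≤ k ∧ tradeGain p q I = maxGain N k p q := by
  obtain ⟨I, hI, h⟩ := Finset.exists_mem_eq_sup' (schedules_nonempty N k) (tradeGain p q)
  exact ⟨I, (mem_schedules.1 hI).1, (mem_schedules.1 hI).2, h.symm⟩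

end MaxGain

section Shift

variable {Y : Type*} {N k : ℕ} {I U : Finset (ℕ × ℕ)}

theorem IsSchedule.shift (hI : IsSchedule N I) :
    IsSchedule N ({x ∈ I | 1 < x.2}.image fun x => (x.1 - 1, x.2 - 1)) where
  lt := by
    simp only [Finset.forall_mem_image, Finset.mem_filter]
    rintro x ⟨hx, hx₁⟩
    have := hI.lt x hx
    omega
  le := by
    simp only [Finset.forall_mem_image, Finset.mem_filter]
    rintro x ⟨hx, -⟩
    exact (Nat.sub_le _ _).trans (hI.le x hx)
  nonoverlap := by
    simp only [Finset.coe_image, Finset.coe_filter]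
    rintro _ ⟨x, ⟨hx, -⟩, rfl⟩ _ ⟨y, ⟨hy, -⟩, rfl⟩ hxy
    exact (hI.nonoverlap hx hy fun h => hxy (by rw [h])).imp
      (Nat.sub_le_sub_right · 1) (Nat.sub_le_sub_right · 1)

theorem IsSchedule.injOn_shift (hI : IsSchedule N I) :
    Set.InjOn (fun x : ℕ × ℕ => (x.1 - 1, x.2 - 1)) {x ∈ I | 1 < x.2} := by
  rintro x ⟨hx, hx₁⟩ y ⟨hy, hy₁⟩ heq
  by_contra hne
  have hxlt := hI.lt x hx
  have hylt := hI.lt y hy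
  have hover := hI.nonoverlap hx hy hne
  have := congrArg Prod.snd heq
  dsimp only at this
  omega

theorem IsSchedule.card_filter_fst_eq_zero_le_one (hI : IsSchedule N I) :
    #{x ∈ I | x.1 = 0} ≤ 1 := by
  refine Finset.card_le_one.2 fun x hx y hy => ?_
  rw [Finset.mem_filter] at hx hy
  by_contra hne
  have hxlt := hI.lt x hx.1
  have hylt := hI.lt y hy.1
  have hover := hI.nonoverlap hx.1 hy.1 hne
  omega

theorem birkhoffSum_sub_birkhoffSum_shift (T : Y → Y) (f g : Y → ℝ) (y : Y) {u v : ℕ}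
    (hv : 0 < v) :
    birkhoffSum T g v y - birkhoffSum T f u y + (f y - g y) =
      birkhoffSum T g (v - 1) (T y) - birkhoffSum T f (u - 1) (T y) +
        if u = 0 then f y else 0 := by
  obtain ⟨v, rfl⟩ := Nat.exists_eq_succ_of_ne_zero hv.ne'
  cases u <;> simp [birkhoffSum_succ'] <;> ring

/-- Following the orbit of `T y` instead of that of `y`, every trade happens one step earlier.
A trade over `[0, 1]` becomes void, and only the trade starting at time `0` (there is at most one)
misses the first increment. -/
theorem IsSchedule.exists_tradeGain_shift (hI : IsSchedule N I) (T : Y → Y) (f g : Y → ℝ) (y : Y) :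
    ∃ I', IsSchedule N I' ∧ #I' ≤ #I ∧
      tradeGain (birkhoffSum T f · y) (birkhoffSum T g · y) I + #I * (f y - g y) ≤
        tradeGain (birkhoffSum T f · (T y)) (birkhoffSum T g · (T y)) I' + max (f y) 0 := by
  refine ⟨_, hI.shift, Finset.card_image_le.trans (Finset.card_filter_le _ _), ?_⟩
  set gain' : ℕ × ℕ → ℝ := fun x =>
    birkhoffSum T g (x.2 - 1) (T y) - birkhoffSum T f (x.1 - 1) (T y) with hgain'
  have hvoid : ∀ x ∈ I, ¬ 1 < x.2 → gain' x = 0 := fun x hx hx₁ => by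
    have := hI.lt x hx
    simp [hgain', show x.1 = 0 by omega, show x.2 = 1 by omega]
  have hfirst : (#{x ∈ I | x.1 = 0} : ℝ) * f y ≤ max (f y) 0 := by
    rcases Nat.le_one_iff_eq_zero_or_eq_one.1 hI.card_filter_fst_eq_zero_le_one with h | h <;>
      simp [h]
  calc tradeGain (birkhoffSum T f · y) (birkhoffSum T g · y) I + #I * (f y - g y)
      = ∑ x ∈ I, (birkhoffSum T g x.2 y - birkhoffSum T f x.1 y + (f y - g y)) := by
        rw [Finset.sum_add_distrib, Finset.sum_const, nsmul_eq_mul, tradeGain]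
    _ = ∑ x ∈ I, (gain' x + if x.1 = 0 then f y else 0) :=
        Finset.sum_congr rfl fun x hx =>
          birkhoffSum_sub_birkhoffSum_shift T f g y (Nat.zero_lt_of_lt (hI.lt x hx))
    _ = ∑ x ∈ I with 1 < x.2, gain' x + #{x ∈ I | x.1 = 0} * f y := by
        rw [Finset.sum_add_distrib, ← Finset.sum_filter, Finset.sum_const, nsmul_eq_mul,
          Finset.sum_filter_of_ne fun x hx => not_imp_comm.1 (hvoid x hx)]
    _ ≤ ∑ x ∈ I with 1 < x.2, gain' x + max (f y) 0 := by gcongr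
    _ = _ := by rw [tradeGain, Finset.sum_image (by simpa using hI.injOn_shift)]

theorem maxGain_birkhoffSum_le (N k : ℕ) (T : Y → Y) {f g : Y → ℝ} {y : Y} (hgf : g y ≤ f y) :
    maxGain N k (birkhoffSum T f · y) (birkhoffSum T g · y) ≤
      maxGain N k (birkhoffSum T f · (T y)) (birkhoffSum T g · (T y)) + max (f y) 0 := by
  obtain ⟨I, hI, hIk, hmax⟩ := exists_tradeGain_eq_maxGain N k
    (birkhoffSum T f · y) (birkhoffSum T g · y)
  obtain ⟨I', hI', hcard, hle⟩ := hI.exists_tradeGain_shift T f g y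
  have hspread : 0 ≤ #I * (f y - g y) := mul_nonneg (Nat.cast_nonneg _) (sub_nonneg.2 hgf)
  linarith [tradeGain_le_maxGain (p := (birkhoffSum T f · (T y)))
    (q := (birkhoffSum T g · (T y))) hI' (hcard.trans hIk)]

theorem maxGain_birkhoffSum_add_le (T : Y → Y) {f g : Y → ℝ} {y : Y} (hU : IsSchedule N U)
    (hk : k ≤ #U) (hfg : ∀ x ∈ U, birkhoffSum T f x.1 y ≤ 0 ∧ 0 ≤ birkhoffSum T g x.2 y) :
    maxGain N k (birkhoffSum T f · y) (birkhoffSum T g · y) + k * (f y - g y) ≤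
      maxGain N k (birkhoffSum T f · (T y)) (birkhoffSum T g · (T y)) + max (f y) 0 := by
  obtain ⟨I, hI, hIk, hmax⟩ := exists_tradeGain_eq_maxGain N k
    (birkhoffSum T f · y) (birkhoffSum T g · y)
  obtain ⟨J, hJ, rfl, hIJ⟩ := hI.exists_card_eq hU
    (p := (birkhoffSum T f · y)) (q := (birkhoffSum T g · y)) hfg hIk hk
  obtain ⟨J', hJ', hcard, hle⟩ := hJ.exists_tradeGain_shift T f g y
  linarith [tradeGain_le_maxGain (p := (birkhoffSum T f · (T y)))
    (q := (birkhoffSum T g · (T y))) hJ' hcard]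

end Shift

/-- The sequence `s 0, …, s L` crosses from below `α` to above `β` on at least `k`
non-overlapping time intervals. -/
def admitsUpcrossings (s : ℕ → ℝ) (L : ℕ) (α β : ℝ) (k : ℕ) : Prop :=
  ∃ I, IsSchedule L I ∧ k ≤ #I ∧ ∀ x ∈ I, s x.1 ≤ α ∧ β ≤ s x.2

section Bishop

variable {Y : Type*}

theorem birkhoffSum_sub_const (T : Y → Y) (f : Y → ℝ) (c : ℝ) (n : ℕ) (y : Y) :
    birkhoffSum T (fun z => f z - c) n y = n * (birkhoffAverage ℝ T f n y - c) := by
  rcases n.eq_zero_or_pos with rfl | hn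
  · simp
  · simp [birkhoffSum, birkhoffAverage]
    field_simp

variable [MeasurableSpace Y] {μ : Measure Y} {T : Y → Y}

theorem integrable_birkhoffSum (hT : MeasurePreserving T μ μ) {f : Y → ℝ} (hf : Integrable f μ)
    (n : ℕ) : Integrable (birkhoffSum T f n) μ :=
  integrable_finsetSum _ fun i _ => (hT.iterate i).integrable_comp_of_integrable hf

theorem integrable_maxGain_birkhoffSum (hT : MeasurePreserving T μ μ) {f g : Y → ℝ}
    (hf : Integrable f μ) (hg : Integrable g μ) (N k : ℕ) :
    Integrable (fun y => maxGain N k (birkhoffSum T f · y) (birkhoffSum T g · y)) μ := by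
  have hsup := Finset.sup'_induction (p := (Integrable · μ)) (schedules_nonempty N k)
    (fun I y => tradeGain (birkhoffSum T f · y) (birkhoffSum T g · y) I)
    (fun _ h₁ _ h₂ => h₁.sup h₂) fun I _ => integrable_finsetSum I fun x _ =>
      (integrable_birkhoffSum hT hg x.2).sub (integrable_birkhoffSum hT hf x.1)
  convert hsup using 2 with y
  rw [Finset.sup'_apply, maxGain]

theorem integral_comp_self (hT : MeasurePreserving T μ μ) {φ : Y → ℝ}
    (hφ : AEStronglyMeasurable φ μ) : ∫ y, φ (T y) ∂μ = ∫ y, φ y ∂μ := by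
  rw [← integral_map hT.aemeasurable (by rwa [hT.map_eq]), hT.map_eq]

/-- A nonnegative function that differs from `h` by the coboundary `Φ ∘ T - Φ` has the same
integral as `h`, so Markov's inequality bounds how often it is large. -/
theorem mul_measureReal_le_integral_of_coboundary [IsFiniteMeasure μ]
    (hT : MeasurePreserving T μ μ) {Φ h : Y → ℝ} (hΦ : Integrable Φ μ) (hh : Integrable h μ)
    {c : ℝ} (hc : 0 ≤ c) {A : Set Y} (hnonneg : ∀ y, 0 ≤ Φ (T y) - Φ y + h y)
    (hA : ∀ y ∈ A, c ≤ Φ (T y) - Φ y + h y) : c * μ.real A ≤ ∫ y, h y ∂μ := by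
  have hΦT : Integrable (fun y => Φ (T y)) μ := hT.integrable_comp_of_integrable hΦ
  calc c * μ.real A ≤ c * μ.real {y | c ≤ Φ (T y) - Φ y + h y} :=
        mul_le_mul_of_nonneg_left (measureReal_mono hA) hc
    _ ≤ ∫ y, (Φ (T y) - Φ y + h y) ∂μ :=
        mul_meas_ge_le_integral_of_nonneg (.of_forall hnonneg) ((hΦT.sub hΦ).add hh) c
    _ = ∫ y, h y ∂μ := by
        rw [integral_add (f := fun y => Φ (T y) - Φ y) (hΦT.sub hΦ) hh, integral_sub hΦT hΦ,
          integral_comp_self hT hΦ.aestronglyMeasurable, sub_self, zero_add]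

theorem mul_measureReal_admitsUpcrossings_le [IsFiniteMeasure μ] (hT : MeasurePreserving T μ μ)
    {f : Y → ℝ} (hf : Integrable f μ) (N k : ℕ) {α β : ℝ} (hαβ : α ≤ β) :
    k * (β - α) * μ.real {y | admitsUpcrossings (birkhoffAverage ℝ T f · y) N α β k} ≤
      ∫ y, max (f y - α) 0 ∂μ := by
  have hfα : Integrable (fun z => f z - α) μ := hf.sub (integrable_const α)
  have hfβ : Integrable (fun z => f z - β) μ := hf.sub (integrable_const β)
  refine mul_measureReal_le_integral_of_coboundary hT
    (integrable_maxGain_birkhoffSum hT hfα hfβ N k) hfα.pos_part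
    (mul_nonneg k.cast_nonneg (sub_nonneg.2 hαβ)) (fun y => ?_) fun y ⟨U, hU, hk, hcross⟩ => ?_
  · linarith [maxGain_birkhoffSum_le N k T (f := fun z => f z - α) (g := fun z => f z - β)
      (sub_le_sub_left hαβ (f y))]
  · have := maxGain_birkhoffSum_add_le T (f := fun z => f z - α) (g := fun z => f z - β) hU hk
      fun x hx => by
        rw [birkhoffSum_sub_const, birkhoffSum_sub_const]
        exact ⟨mul_nonpos_of_nonneg_of_nonpos x.1.cast_nonneg (sub_nonpos.2 (hcross x hx).1),
          mul_nonneg x.2.cast_nonneg (sub_nonneg.2 (hcross x hx).2)⟩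
    linarith

theorem integral_max_sub_zero_le [IsProbabilityMeasure μ] {f : Y → ℝ} (hf : Integrable f μ)
    (α : ℝ) : ∫ y, max (f y - α) 0 ∂μ ≤ ∫ y, |f y| ∂μ + |α| :=
  calc ∫ y, max (f y - α) 0 ∂μ ≤ ∫ y, (|f y| + |α|) ∂μ :=
        integral_mono (hf.sub (integrable_const α)).pos_part (hf.abs.add (integrable_const _))
          fun y => max_le ((le_abs_self _).trans (abs_sub (f y) α)) (by positivity)
    _ = ∫ y, |f y| ∂μ + |α| := by
        rw [integral_add hf.abs (integrable_const _), integral_const, probReal_univ, one_smul]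

/-- The maximal inequality is the upcrossing inequality for a single upcrossing of `[0, b]`: it
starts at time `0`, where the average vanishes by convention. -/
theorem mul_measureReal_exists_le_birkhoffAverage_le [IsFiniteMeasure μ]
    (hT : MeasurePreserving T μ μ) {f : Y → ℝ} (hf : Integrable f μ) (N : ℕ) {b : ℝ} (hb : 0 < b) :
    b * μ.real {y | ∃ n ≤ N, b ≤ birkhoffAverage ℝ T f n y} ≤ ∫ y, max (f y) 0 ∂μ := by
  have hsub : {y | ∃ n ≤ N, b ≤ birkhoffAverage ℝ T f n y} ⊆
      {y | admitsUpcrossings (birkhoffAverage ℝ T f · y) N 0 b 1} := by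
    rintro y ⟨n, hnN, hn⟩
    have hn₀ : 0 < n := by
      by_contra! h
      simp [Nat.le_zero.1 h, hb.not_ge] at hn
    exact ⟨{(0, n)}, by simpa using (IsSchedule.empty N).insert hn₀ hnN, by simp, by simpa⟩
  calc b * μ.real {y | ∃ n ≤ N, b ≤ birkhoffAverage ℝ T f n y}
      ≤ b * μ.real {y | admitsUpcrossings (birkhoffAverage ℝ T f · y) N 0 b 1} :=
        mul_le_mul_of_nonneg_left (measureReal_mono hsub) hb.le
    _ ≤ ∫ y, max (f y) 0 ∂μ := by
        simpa using mul_measureReal_admitsUpcrossings_le hT hf N 1 hb.le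

end Bishop

section Fluctuation

variable {s : ℕ → ℝ} {L j k : ℕ} {ε h : ℝ}

theorem admitsFluct.of_le (hs : admitsFluct s L ε k) (hjk : j ≤ k) : admitsFluct s L ε j := by
  obtain ⟨m, hm, hL, hε⟩ := hs
  exact ⟨m, hm, fun i hi => hL i (by omega), fun i hi => hε i (by omega)⟩

theorem numFluct_le_of_not_admitsFluct (hs : ¬ admitsFluct s L ε k) : numFluct s L ε ≤ k :=
  csSup_le' fun _ hj => le_of_not_ge fun hkj => hs (admitsFluct.of_le hj hkj)

/-- The sequence `s 0, …, s L` rises by at least `ε` on at least `k` non-overlapping time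
intervals. -/
def admitsRises (s : ℕ → ℝ) (L : ℕ) (ε : ℝ) (k : ℕ) : Prop :=
  ∃ I, IsSchedule L I ∧ k ≤ #I ∧ ∀ x ∈ I, s x.1 + ε ≤ s x.2

theorem admitsFluct.exists_isSchedule (hs : admitsFluct s L ε k) :
    ∃ I, IsSchedule L I ∧ #I = k ∧ ∀ x ∈ I, ε ≤ |s x.1 - s x.2| := by
  obtain ⟨m, hm, hL, hε⟩ := hs
  have hinj : Function.Injective fun i => (m (2 * i), m (2 * i + 1)) := fun i i' h => by
    have := hm.injective (congrArg Prod.fst h)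
    omega
  refine ⟨(Finset.range k).image fun i => (m (2 * i), m (2 * i + 1)), ⟨?_, ?_, ?_⟩, ?_, ?_⟩
  · exact Finset.forall_mem_image.2 fun i _ => hm (Nat.lt_succ_self _)
  · exact Finset.forall_mem_image.2 fun i hi =>
      (hL _ (by have := Finset.mem_range.1 hi; omega)).2
  · simp only [Finset.coe_image]
    rintro _ ⟨i, -, rfl⟩ _ ⟨i', -, rfl⟩ hne
    have hii' : i ≠ i' := fun h => hne (by rw [h])
    exact (lt_or_gt_of_ne hii').imp (fun h => hm.monotone (by omega))
      fun h => hm.monotone (by omega)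
  · rw [Finset.card_image_of_injective _ hinj, Finset.card_range]
  · exact Finset.forall_mem_image.2 fun i hi => hε i (Finset.mem_range.1 hi)

theorem admitsFluct.admitsRises_or_neg (hs : admitsFluct s L ε (2 * k)) :
    admitsRises s L ε k ∨ admitsRises (-s) L ε k := by
  obtain ⟨I, hI, hcard, hfluct⟩ := hs.exists_isSchedule
  have hsplit := Finset.card_filter_add_card_filter_not (s := I) fun x => s x.1 + ε ≤ s x.2
  have hfalls : ∀ x ∈ I.filter (fun x => ¬ s x.1 + ε ≤ s x.2), (-s) x.1 + ε ≤ (-s) x.2 := by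
    intro x hx
    obtain ⟨hxI, hrise⟩ := Finset.mem_filter.1 hx
    have hxfluct := (le_abs.1 (hfluct x hxI)).resolve_right fun h => hrise (by linarith)
    simp only [Pi.neg_apply]
    linarith
  rcases le_or_gt k #{x ∈ I | s x.1 + ε ≤ s x.2} with hk | hk
  · exact .inl ⟨_, hI.subset (Finset.filter_subset _ _), hk, fun x hx => (Finset.mem_filter.1 hx).2⟩
  · exact .inr ⟨_, hI.subset (Finset.filter_subset _ _), by omega, hfalls⟩

theorem exists_int_mul_between (hh : 0 < h) {a b : ℝ} (hab : a + 2 * h ≤ b) :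
    ∃ c : ℤ, a ≤ c * h ∧ (c + 1) * h ≤ b := by
  refine ⟨⌈a / h⌉, (div_le_iff₀ hh).1 (Int.le_ceil _), ?_⟩
  have := mul_lt_mul_of_pos_right (Int.ceil_lt_add_one (a / h)) hh
  rw [add_mul, div_mul_cancel₀ _ hh.ne'] at this
  linarith

/-- A rise by `2 * h` passes over a whole cell of the grid `h ℤ`, and a bounded sequence meets only
`2 * B` cells. -/
theorem admitsRises.exists_admitsUpcrossings {B : ℕ} (hh : 0 < h)
    (hs : admitsRises s L (2 * h) (2 * B * k)) (hbdd : ∀ n ≤ L, |s n| < B * h) :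
    ∃ c ∈ Finset.Ico (-B : ℤ) B, admitsUpcrossings s L (c * h) ((c + 1) * h) k := by
  obtain ⟨I, hI, hcard, hrise⟩ := hs
  choose! c hc using fun x (hx : x ∈ I) => exists_int_mul_between hh (hrise x hx)
  have hmaps : ∀ x ∈ I, c x ∈ Finset.Ico (-B : ℤ) B := fun x hx => by
    obtain ⟨hleft, hright⟩ := hc x hx
    have hle := hI.le x hx
    have hlow := (abs_lt.1 (hbdd x.1 ((hI.lt x hx).le.trans hle))).1
    have hhigh := (abs_lt.1 (hbdd x.2 hle)).2
    have hlow' : -(B : ℝ) < c x := lt_of_mul_lt_mul_right (by linarith) hh.le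
    have hhigh' : (c x : ℝ) < B := lt_of_mul_lt_mul_right (by linarith) hh.le
    exact Finset.mem_Ico.2 ⟨by exact_mod_cast hlow'.le, by exact_mod_cast hhigh'⟩
  have hB : 0 < B := by
    have := pos_of_mul_pos_left ((abs_nonneg _).trans_lt (hbdd 0 L.zero_le)) hh.le
    exact_mod_cast this
  have hmesh : #(Finset.Ico (-B : ℤ) B) = 2 * B := by
    rw [Int.card_Ico]
    omega
  obtain ⟨c₀, hc₀, hk⟩ := Finset.exists_le_card_fiber_of_mul_le_card_of_maps_to hmaps
    (Finset.nonempty_Ico.2 (by omega)) (by rwa [hmesh])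
  refine ⟨c₀, hc₀, _, hI.subset (Finset.filter_subset _ _), hk, fun x hx => ?_⟩
  obtain ⟨hxI, rfl⟩ := Finset.mem_filter.1 hx
  exact hc x hxI

end Fluctuation

section Measure

variable {Y : Type*} [MeasurableSpace Y] {μ : Measure Y} {T : Y → Y} {f : Y → ℝ} {h : ℝ}

theorem mul_measureReal_exists_le_abs_birkhoffAverage_le [IsFiniteMeasure μ]
    (hT : MeasurePreserving T μ μ) (hf : Integrable f μ) (N : ℕ) {b : ℝ} (hb : 0 < b) :
    b * μ.real {y | ∃ n ≤ N, b ≤ |birkhoffAverage ℝ T f n y|} ≤ ∫ y, |f y| ∂μ := by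
  have hunion : {y | ∃ n ≤ N, b ≤ |birkhoffAverage ℝ T f n y|} ⊆
      {y | ∃ n ≤ N, b ≤ birkhoffAverage ℝ T f n y} ∪
        {y | ∃ n ≤ N, b ≤ birkhoffAverage ℝ T (-f) n y} := by
    rintro y ⟨n, hnN, hn⟩
    refine (le_abs.1 hn).imp (fun h => ⟨n, hnN, h⟩) fun h => ⟨n, hnN, ?_⟩
    rwa [birkhoffAverage_neg]
  calc b * μ.real {y | ∃ n ≤ N, b ≤ |birkhoffAverage ℝ T f n y|}
      ≤ b * (μ.real {y | ∃ n ≤ N, b ≤ birkhoffAverage ℝ T f n y} +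
          μ.real {y | ∃ n ≤ N, b ≤ birkhoffAverage ℝ T (-f) n y}) :=
        mul_le_mul_of_nonneg_left
          ((measureReal_mono hunion).trans (measureReal_union_le _ _)) hb.le
    _ ≤ ∫ y, max (f y) 0 ∂μ + ∫ y, max ((-f) y) 0 ∂μ := by
        rw [mul_add]
        exact add_le_add (mul_measureReal_exists_le_birkhoffAverage_le hT hf N hb)
          (mul_measureReal_exists_le_birkhoffAverage_le hT hf.neg N hb)
    _ = ∫ y, |f y| ∂μ := by
        rw [← integral_add hf.pos_part hf.neg.pos_part]
        exact integral_congr_ae (.of_forall fun y => by simp)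

variable [IsProbabilityMeasure μ]

theorem measureReal_exists_mesh_admitsUpcrossings_le (hT : MeasurePreserving T μ μ)
    (hf : Integrable f μ) (N : ℕ) {k : ℕ} (hk : 0 < k) (B : ℕ) (hh : 0 < h) :
    μ.real {y | ∃ c ∈ Finset.Ico (-B : ℤ) B,
        admitsUpcrossings (birkhoffAverage ℝ T f · y) N (c * h) ((c + 1) * h) k} ≤
      2 * B * (∫ y, |f y| ∂μ + B * h) / h / k := by
  have hcell : ∀ c ∈ Finset.Ico (-B : ℤ) B,
      μ.real {y | admitsUpcrossings (birkhoffAverage ℝ T f · y) N (c * h) ((c + 1) * h) k} ≤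
        (∫ y, |f y| ∂μ + B * h) / (k * h) := fun c hc => by
    have hbishop := mul_measureReal_admitsUpcrossings_le hT hf N k
      (show (c : ℝ) * h ≤ (c + 1) * h by linarith)
    rw [show (c + 1) * h - c * h = h by ring] at hbishop
    have habs : |(c : ℝ) * h| ≤ B * h := by
      rw [abs_mul, abs_of_pos hh]
      have : |c| ≤ (B : ℤ) := abs_le.2 ⟨(Finset.mem_Ico.1 hc).1, (Finset.mem_Ico.1 hc).2.le⟩
      gcongr
      exact_mod_cast this
    rw [le_div_iff₀' (by positivity)]
    exact (hbishop.trans (integral_max_sub_zero_le hf _)).trans (by gcongr)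
  calc μ.real {y | ∃ c ∈ Finset.Ico (-B : ℤ) B,
        admitsUpcrossings (birkhoffAverage ℝ T f · y) N (c * h) ((c + 1) * h) k}
      = μ.real (⋃ c ∈ Finset.Ico (-B : ℤ) B,
          {y | admitsUpcrossings (birkhoffAverage ℝ T f · y) N (c * h) ((c + 1) * h) k}) := by
        congr 1
        ext y
        simp
    _ ≤ #(Finset.Ico (-B : ℤ) B) • ((∫ y, |f y| ∂μ + B * h) / (k * h)) :=
        (measureReal_biUnion_finset_le _ _).trans (Finset.sum_le_card_nsmul _ _ _ hcell)
    _ = 2 * B * (∫ y, |f y| ∂μ + B * h) / h / k := by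
        rw [Int.card_Ico, show ((B : ℤ) - -B).toNat = 2 * B by omega]
        simp
        ring

theorem measureReal_admitsFluct_birkhoffAverage_le (hT : MeasurePreserving T μ μ)
    (hf : Integrable f μ) (L : ℕ) {B k : ℕ} (hB : 0 < B) (hk : 0 < k) (hh : 0 < h) :
    μ.real {y | admitsFluct (birkhoffAverage ℝ T f · y) L (2 * h) (2 * (2 * B * k))} ≤
      (∫ y, |f y| ∂μ) / h / B + 4 * B * (∫ y, |f y| ∂μ + B * h) / h / k := by
  set large : Set Y := {y | ∃ n ≤ L, B * h ≤ |birkhoffAverage ℝ T f n y|}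
  set crossing : (Y → ℝ) → Set Y := fun g => {y | ∃ c ∈ Finset.Ico (-B : ℤ) B,
    admitsUpcrossings (birkhoffAverage ℝ T g · y) L (c * h) ((c + 1) * h) k}
  have hcover : {y | admitsFluct (birkhoffAverage ℝ T f · y) L (2 * h) (2 * (2 * B * k))} ⊆
      large ∪ (crossing f ∪ crossing (-f)) := by
    intro y hy
    rw [Set.mem_ofPred_eq] at hy
    refine or_iff_not_imp_left.2 fun hy_large => ?_
    have hbdd : ∀ n ≤ L, |birkhoffAverage ℝ T f n y| < B * h := fun n hn =>
      lt_of_not_ge fun hge => hy_large ⟨n, hn, hge⟩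
    refine hy.admitsRises_or_neg.imp
      (admitsRises.exists_admitsUpcrossings hh · hbdd) fun hrise => ?_
    simp only [crossing, birkhoffAverage_neg]
    exact hrise.exists_admitsUpcrossings hh fun n hn => by simpa using hbdd n hn
  have hlarge : μ.real large ≤ (∫ y, |f y| ∂μ) / h / B := by
    rw [div_div, le_div_iff₀' (by positivity), mul_comm h]
    exact mul_measureReal_exists_le_abs_birkhoffAverage_le hT hf L (by positivity)
  have hcrossing := measureReal_exists_mesh_admitsUpcrossings_le hT hf L hk B hh
  have hcrossing_neg := measureReal_exists_mesh_admitsUpcrossings_le hT hf.neg L hk B hh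
  simp only [Pi.neg_apply, abs_neg] at hcrossing_neg
  calc _ ≤ μ.real large + (μ.real (crossing f) + μ.real (crossing (-f))) :=
        (measureReal_mono hcover).trans <| (measureReal_union_le _ _).trans <|
          add_le_add_right (measureReal_union_le _ _) _
    _ ≤ (∫ y, |f y| ∂μ) / h / B + (2 * B * (∫ y, |f y| ∂μ + B * h) / h / k +
          2 * B * (∫ y, |f y| ∂μ + B * h) / h / k) :=
        add_le_add hlarge (add_le_add hcrossing hcrossing_neg)
    _ = _ := by ring

end Measure

theorem ergAvg_eq_birkhoffAverage {Y : Type*} (T : Y → Y) (f : Y → ℝ) (n : ℕ) (y : Y) :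
    ergAvg T f n y = birkhoffAverage ℝ T f n y := by
  simp [ergAvg, birkhoffAverage, birkhoffSum]

theorem exists_nat_pos_div_lt (C : ℝ) {δ : ℝ} (hδ : 0 < δ) : ∃ n : ℕ, 0 < n ∧ C / n < δ :=
  ((eventually_gt_atTop 0).and
    ((tendsto_const_div_atTop_nhds_zero_nat C).eventually_lt_const hδ)).exists

universe u

theorem fluctuation_theorem_sequence_version_general (C : ℝ) {ε δ : ℝ} (hε : 0 < ε) (hδ : 0 < δ) :
    ∃ k : ℕ, ∀ {Y : Type u} [MeasurableSpace Y] {μ : Measure Y} [IsProbabilityMeasure μ]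
      {T : Y → Y}, MeasurePreserving T μ μ → ∀ {f : Y → ℝ}, Integrable f μ →
      ∫ y, |f y| ∂μ ≤ C → ∀ L : ℕ,
      1 - δ ≤ μ.real {y | numFluct (fun j => ergAvg T f j y) L ε ≤ k} := by
  obtain ⟨B, hB, hBδ⟩ := exists_nat_pos_div_lt (C / (ε / 2)) (half_pos hδ)
  obtain ⟨k, hk, hkδ⟩ :=
    exists_nat_pos_div_lt (4 * B * (C + B * (ε / 2)) / (ε / 2)) (half_pos hδ)
  refine ⟨2 * (2 * B * k), fun {Y} _ μ _ T hT f hf hC L => ?_⟩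
  set good : Set Y := {y | numFluct (fun j => ergAvg T f j y) L ε ≤ 2 * (2 * B * k)}
  set bad : Set Y :=
    {y | admitsFluct (birkhoffAverage ℝ T f · y) L (2 * (ε / 2)) (2 * (2 * B * k))}
  have hcover : Set.univ ⊆ good ∪ bad := fun y _ => or_iff_not_imp_right.2 fun hy => by
    simp only [bad, mul_div_cancel₀ ε two_ne_zero, ← ergAvg_eq_birkhoffAverage] at hy
    exact numFluct_le_of_not_admitsFluct hy
  have hbad : μ.real bad ≤ δ := calc
    μ.real bad ≤ (∫ y, |f y| ∂μ) / (ε / 2) / B +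
          4 * B * (∫ y, |f y| ∂μ + B * (ε / 2)) / (ε / 2) / k :=
        measureReal_admitsFluct_birkhoffAverage_le hT hf L hB hk (half_pos hε)
    _ ≤ C / (ε / 2) / B + 4 * B * (C + B * (ε / 2)) / (ε / 2) / k := by gcongr
    _ ≤ δ := by linarith
  have htotal := (measureReal_mono (μ := μ) hcover).trans (measureReal_union_le good bad)
  rw [probReal_univ] at htotal
  linarith

section Uniform

variable {Y : Type*} [MeasurableSpace Y] [MeasurableSingletonClass Y]

theorem measurePreserving_uniformOn_univ [Finite Y] {T : Y → Y} (hT : Function.Bijective T) :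
    MeasurePreserving T (uniformOn Set.univ) (uniformOn Set.univ) := by
  cases nonempty_fintype Y
  refine ⟨.of_discrete, Measure.ext fun s hs => ?_⟩
  rw [Measure.map_apply .of_discrete hs, uniformOn_univ, uniformOn_univ,
    Measure.count_apply .of_discrete, Measure.count_apply hs,
    Set.encard_preimage_of_bijective hT]

theorem measureReal_uniformOn_univ [Fintype Y] (P : Y → Prop) [DecidablePred P] :
    (uniformOn Set.univ).real {y | P y} =
      1 / (Fintype.card Y : ℝ) * (#(Finset.univ.filter P) : ℝ) := by
  rw [measureReal_def, uniformOn_univ, ← Finset.coe_filter_univ, Measure.count_apply_finset]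
  simp [div_eq_inv_mul]

theorem integral_uniformOn_univ [Fintype Y] (f : Y → ℝ) :
    ∫ y, f y ∂uniformOn Set.univ = 1 / (Fintype.card Y : ℝ) * ∑ y, f y := by
  simp [uniformOn, ProbabilityTheory.cond]

end Uniform

theorem exists_forall_one_sub_le_card_filter_numFluct_le (C : ℝ) {ε δ : ℝ} (hε : 0 < ε)
    (hδ : 0 < δ) :
    ∃ k : ℕ, ∀ {Y : Type u} [Fintype Y] [Nonempty Y] {T : Y → Y}, Function.Bijective T →
      ∀ {F : Y → ℝ}, 1 / (Fintype.card Y : ℝ) * ∑ y, |F y| ≤ C → ∀ (L : ℕ)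
      [DecidablePred fun y => numFluct (fun j => ergAvg T F j y) L ε ≤ k],
      1 - δ ≤ 1 / (Fintype.card Y : ℝ) *
        (#{y | numFluct (fun j => ergAvg T F j y) L ε ≤ k} : ℝ) := by
  obtain ⟨k, hk⟩ := fluctuation_theorem_sequence_version_general.{u} C hε hδ
  refine ⟨k, fun {Y} _ _ T hT F hF L _ => ?_⟩
  let _ : MeasurableSpace Y := ⊤
  rw [← measureReal_uniformOn_univ]
  exact hk (measurePreserving_uniformOn_univ hT) .of_finite
    ((integral_uniformOn_univ _).trans_le hF) L

theorem average_abs_le_add_average_abs_filter_lt {Y : Type*} [Fintype Y] [Nonempty Y] (F : Y → ℝ)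
    {b : ℝ} (hb : 0 ≤ b) :
    1 / (Fintype.card Y : ℝ) * ∑ y, |F y| ≤
      b + 1 / (Fintype.card Y : ℝ) * ∑ y with b < |F y|, |F y| := by
  have htrunc : ∀ y, |F y| ≤ b + if b < |F y| then |F y| else 0 := fun y => by
    split_ifs <;> linarith
  calc 1 / (Fintype.card Y : ℝ) * ∑ y, |F y|
      ≤ 1 / (Fintype.card Y : ℝ) * ∑ y, (b + if b < |F y| then |F y| else 0) := by
        gcongr with y
        exact htrunc y
    _ = b + 1 / (Fintype.card Y : ℝ) * ∑ y with b < |F y|, |F y| := by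
        rw [Finset.sum_add_distrib, ← Finset.sum_filter, Finset.sum_const, nsmul_eq_mul,
          Finset.card_univ]
        field_simp

open scoped Classical in
/-- Standard sequence version of Kachurovskii's fluctuation theorem: for a sequence of
finite sets `Y n` with `|Y n| = M n → ∞`, transitive permutations `T n`, and a uniformly
integrable sequence `F n`, for all `ε, δ > 0` there exist `N` and `k` such that for all
`n > N`, the proportion of points whose sequence of ergodic averages
`(A_j(F n,T n,y))_{j=1}^{M n}` has at most `k` `ε`-fluctuations is at least `1 − δ`. -/
theorem fluctuation_theorem_sequence_version
    (Y : ℕ → Type*) [∀ n, Fintype (Y n)] [∀ n, Nonempty (Y n)]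
    (hMtop : Tendsto (fun n => Fintype.card (Y n)) atTop atTop)
    (T : ∀ n, Y n → Y n) (hT : ∀ n, Function.Bijective (T n))
    (htrans : ∀ n, ∃ x : Y n, ∀ y : Y n, ∃ i : ℕ, (T n)^[i] x = y)
    (F : ∀ n, Y n → ℝ)
    (hUI : ∀ ε > (0 : ℝ), ∃ n₀ k₀ : ℕ, ∀ n ≥ n₀, ∀ k ≥ k₀,
      (1 / (Fintype.card (Y n) : ℝ)) *
        ∑ x ∈ Finset.univ.filter (fun x : Y n => (k : ℝ) < |F n x|), |F n x| < ε) :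
    ∀ ε > (0 : ℝ), ∀ δ > (0 : ℝ), ∃ N k : ℕ, ∀ n > N,
      1 - δ ≤ (1 / (Fintype.card (Y n) : ℝ)) *
        ((Finset.univ.filter (fun y : Y n =>
          numFluct (fun j => ergAvg (T n) (F n) j y) (Fintype.card (Y n)) ε ≤ k)).card : ℝ) := by
  intro ε hε δ hδ
  obtain ⟨n₀, k₀, hk₀⟩ := hUI 1 one_pos
  obtain ⟨k, hk⟩ := exists_forall_one_sub_le_card_filter_numFluct_le (k₀ + 1) hε hδ
  refine ⟨n₀, k, fun n hn => hk (hT n) ?_ _⟩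
  exact (average_abs_le_add_average_abs_filter_lt (F n) k₀.cast_nonneg).trans
    (add_le_add_right (hk₀ n hn.le k₀ le_rfl |>.le) _)
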